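/- Let k ≥ 2 be an integer and τ a real number, and let a, b > 0 satisfy the two equations (a + b − τ)·b^k + τ·b − 2 = 0 and (a + b − τ)·a^k + τ·a − 2 = 0. If τ·b > 2 and a ≠ b, then a/b is the unique positive root of the polynomial P_b(x) = (x^{k−1} + x^{k−2} + ⋯ + x^2 + x)·(τ·b − 2) − 2; consequently, for fixed b there is at most one a > 0 with a ≠ b such that (a, b) solves the system. -/

import Mathlib

open scoped BigOperators

theorem geom_aux (x : ℝ) (n : ℕ) :
    (∑ j ∈ Finset.Icc 1 n, x ^ j) * (x - 1) = x ^ (n + 1) - x := by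
  induction n with
  | zero => simp
  | succ n ih =>
    rw [Finset.sum_Icc_succ_top (by omega), add_mul, ih]
    ring

theorem mono_aux (x y : ℝ) (n : ℕ) (hn : 1 ≤ n) (hx : 0 < x) (h : x < y) :
    ∑ j ∈ Finset.Icc 1 n, x ^ j < ∑ j ∈ Finset.Icc 1 n, y ^ j := by
  apply Finset.sum_lt_sum_of_nonempty
  · exact ⟨1, by simp [hn]⟩
  · intro j hj
    have := (Finset.mem_Icc.mp hj).1
    exact pow_lt_pow_left₀ h hx.le (by omega)

/-- If `a, b > 0` solve system (ab), `τ b > 2` and `a ≠ b`, then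
`a/b` is the unique positive root of
`P_b(x) = (x^{k−1} + ⋯ + x)(τ b − 2) − 2`; consequently, for fixed `b` there
is at most one `a > 0` with `a ≠ b` solving the system. -/
theorem stmt18 (k : ℕ) (hk : 2 ≤ k) (τ a b : ℝ) (ha : 0 < a) (hb : 0 < b)
    (h1 : (a + b - τ) * b ^ k + τ * b - 2 = 0)
    (h2 : (a + b - τ) * a ^ k + τ * a - 2 = 0)
    (hτb : 2 < τ * b) (hab : a ≠ b) (P : ℝ → ℝ)
    (hP : ∀ x : ℝ, P x = (∑ j ∈ Finset.Icc 1 (k - 1), x ^ j) * (τ * b - 2) - 2) :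
    (0 < a / b ∧ P (a / b) = 0 ∧ ∀ y : ℝ, 0 < y → P y = 0 → y = a / b) ∧
      (∀ a' : ℝ, 0 < a' → a' ≠ b →
        (a' + b - τ) * b ^ k + τ * b - 2 = 0 →
        (a' + b - τ) * a' ^ k + τ * a' - 2 = 0 → a' = a) := by
  have hx : 0 < a / b := div_pos ha hb
  have hc : 0 < τ * b - 2 := by linarith
  have hbk : 0 < b ^ k := pow_pos hb k
  have hroot : P (a / b) = 0 := by
    rw [hP]
    have hg := geom_aux (a / b) (k - 1)
    rw [show k - 1 + 1 = k by omega] at hg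
    have hx1 : a / b - 1 ≠ 0 := by
      intro h
      apply hab
      have h' : a / b = 1 := by linarith
      rwa [div_eq_one_iff_eq hb.ne'] at h'
    obtain ⟨x, hxd⟩ : ∃ x, x = a / b := ⟨_, rfl⟩
    have hax : a = x * b := by rw [hxd]; field_simp
    rw [← hxd] at hg hx1 ⊢
    have hak : a ^ k = x ^ k * b ^ k := by rw [hax, mul_pow]
    rw [hak] at h2
    have h3 : (τ * b - 2) * (x - x ^ k) + 2 * (x - 1) = 0 := by
      have e : τ * a = τ * (x * b) := by rw [← hax]
      linear_combination h2 - e - x ^ k * h1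
    apply mul_right_cancel₀ hx1
    linear_combination (τ * b - 2) * hg - h3
  refine ⟨⟨hx, hroot, ?_⟩, ?_⟩
  · intro y hy hPy
    rw [hP] at hroot hPy
    rcases lt_trichotomy y (a / b) with h | h | h
    · have := mul_lt_mul_of_pos_right (mono_aux y (a / b) (k - 1) (by omega) hy h) hc
      linarith
    · exact h
    · have := mul_lt_mul_of_pos_right (mono_aux (a / b) y (k - 1) (by omega) hx h) hc
      linarith
  · intro a' _ _ h1' _
    apply mul_right_cancel₀ hbk.ne'
    linear_combination h1' - h1
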